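/- arXiv:2111.07289 — 2 statements merged into one kernel-verified Lean document; each statement's English description precedes it below -/
import Mathlib

section
/- A bipartite graph G is not isomorphic to any proximinal graph if and only if G is finite and empty. -/
open Set

/-- A semimetric on a set `X`: a symmetric, nonnegative distance function
vanishing exactly on the diagonal. -/
structure IsSemimetric {X : Type*} (d : X → X → ℝ) : Prop where
  nonneg : ∀ x y, 0 ≤ d x y
  symm : ∀ x y, d x y = d y x
  eq_zero_iff : ∀ x y, d x y = 0 ↔ x = y

/-- A metric: a semimetric satisfying the triangle inequality. -/
def IsMetric {X : Type*} (d : X → X → ℝ) : Prop :=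
  IsSemimetric d ∧ ∀ x y z, d x y ≤ d x z + d z y

/-- An ultrametric: a semimetric satisfying the strong triangle inequality
(which implies the triangle inequality). -/
def IsUltrametric {X : Type*} (d : X → X → ℝ) : Prop :=
  IsSemimetric d ∧ ∀ x y z, d x y ≤ max (d x z) (d z y)

/-- `dist(A,B) = inf {d a b : a ∈ A, b ∈ B}`. -/
noncomputable def SetDist {X : Type*} (d : X → X → ℝ) (A B : Set X) : ℝ :=
  sInf (Set.image2 d A B)

/-- `A` is proximinal in `(X,d)`: every point of `X` has a best approximation in `A`. -/
def Proximinal {X : Type*} (d : X → X → ℝ) (A : Set X) : Prop :=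
  ∀ x : X, ∃ a ∈ A, d x a = sInf ((d x) '' A)

/-- `G` is the proximinal graph `G_{X,d}(A,B)`: a bipartite graph with (nonempty,
disjoint, proximinal) parts `A` and `B`, whose vertex set is `A ∪ B` (all other
points of the ambient type are isolated and are not vertices of the graph), and in
which `a ∈ A` and `b ∈ B` are adjacent iff `d a b = dist(A,B)`. -/
structure ProximinalFor {X : Type*} (d : X → X → ℝ) (G : SimpleGraph X) (A B : Set X) : Prop where
  nonemptyA : A.Nonempty
  nonemptyB : B.Nonempty
  disj : Disjoint A B
  proxA : Proximinal d A
  proxB : Proximinal d B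
  edges_between : ∀ u v, G.Adj u v → (u ∈ A ∧ v ∈ B) ∨ (u ∈ B ∧ v ∈ A)
  adj_iff : ∀ a ∈ A, ∀ b ∈ B, (G.Adj a b ↔ d a b = SetDist d A B)

/-- `G` is a farthest graph for `(X,d)` with parts `A`, `B`: `a ∈ A` and `b ∈ B`
are adjacent iff `d a b = sup {d x y : x ∈ A, y ∈ B}`, i.e. iff `d a b` is an upper
bound of all the cross distances. -/
structure FarthestFor {X : Type*} (d : X → X → ℝ) (G : SimpleGraph X) (A B : Set X) : Prop where
  nonemptyA : A.Nonempty
  nonemptyB : B.Nonempty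
  disj : Disjoint A B
  edges_between : ∀ u v, G.Adj u v → (u ∈ A ∧ v ∈ B) ∨ (u ∈ B ∧ v ∈ A)
  adj_iff : ∀ a ∈ A, ∀ b ∈ B, (G.Adj a b ↔ ∀ x ∈ A, ∀ y ∈ B, d x y ≤ d a b)

universe u

/-!
The distances between two nonempty finite sets attain their infimum, so a finite proximinal graph
has an edge. Conversely, a bipartite graph with an edge is proximinal for the metric taking the
value `1` on edges and `2` on non-edges. If the vertex set is infinite and the graph is empty, the
given parts may be replaced by others: map the vertices onto `ℕ`, let the parts be the preimages of
the even and of the odd numbers, and take `max (1 / (m + 1)) (1 / (n + 1))` as the distance between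
distinct vertices over `m` and `n`. Every point then has a best approximation in either part, while
the distance between the parts is not attained, because the heights `1 / (n + 1)` decrease
alternately between the parts.
-/

/-- The distance function with value `w x y` at distinct points and `0` on the diagonal,
a semimetric for every positive symmetric weight `w`. -/
noncomputable def offDiagDist {X : Type*} (w : X → X → ℝ) (x y : X) : ℝ :=
  open Classical in if x = y then 0 else w x y

/-- The distance function on the vertices of `G` in which distinct vertices are at distance `1`
if they are adjacent and `2` otherwise. Its distances of `1` recover the edges of `G`. -/
noncomputable def adjDist {X : Type*} (G : SimpleGraph X) : X → X → ℝ :=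
  offDiagDist fun x y => open Classical in if G.Adj x y then 1 else 2

/-- The distance function in which distinct points `x`, `y` are at distance `max (h x) (h y)`,
for a height function `h`. Any point of a set that is at most as high as a point `x` outside the
set is then a best approximation of `x`. -/
noncomputable def maxDist {X : Type*} (h : X → ℝ) : X → X → ℝ :=
  offDiagDist fun x y => max (h x) (h y)

section ProximinalGraph

variable {X : Type*} {A B : Set X}

section Semimetric

variable {d : X → X → ℝ}

theorem proximinal_of_finite_image (hA : A.Nonempty) (hfin : ∀ x, (d x '' A).Finite) :
    Proximinal d A :=
  fun x => (hA.image (d x)).csInf_mem (hfin x)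

theorem IsSemimetric.proximinal_of_forall_notMem (hd : IsSemimetric d)
    (hmin : ∀ x ∉ A, ∃ a ∈ A, ∀ y ∈ A, d x a ≤ d x y) : Proximinal d A := by
  intro x
  obtain ⟨a, ha, hle⟩ : ∃ a ∈ A, ∀ y ∈ A, d x a ≤ d x y := by
    by_cases hx : x ∈ A
    · refine ⟨x, hx, fun y _ => ?_⟩
      rw [(hd.eq_zero_iff x x).2 rfl]
      exact hd.nonneg x y
    · exact hmin x hx
  have hleast : IsLeast (d x '' A) (d x a) := ⟨mem_image_of_mem _ ha, forall_mem_image.2 hle⟩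
  exact ⟨a, ha, hleast.csInf_eq.symm⟩

theorem IsSemimetric.setDist_le (hd : IsSemimetric d) {a b : X} (ha : a ∈ A) (hb : b ∈ B) :
    SetDist d A B ≤ d a b :=
  csInf_le ⟨0, forall_mem_image2.2 fun x _ y _ => hd.nonneg x y⟩ (mem_image2_of_mem ha hb)

theorem ProximinalFor.exists_adj {G : SimpleGraph X} (hG : ProximinalFor d G A B)
    (hA : A.Finite) (hB : B.Finite) : ∃ a ∈ A, ∃ b ∈ B, G.Adj a b := by
  obtain ⟨a, ha, b, hb, hab⟩ :=
    (hG.nonemptyA.image2 (f := d) hG.nonemptyB).csInf_mem (hA.image2 d hB)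
  exact ⟨a, ha, b, hb, (hG.adj_iff a ha b hb).2 hab⟩

end Semimetric

section OffDiagDist

variable {w : X → X → ℝ}

theorem offDiagDist_self (x : X) : offDiagDist w x x = 0 :=
  if_pos rfl

theorem offDiagDist_of_ne {x y : X} (hxy : x ≠ y) : offDiagDist w x y = w x y :=
  if_neg hxy

theorem isSemimetric_offDiagDist (hpos : ∀ x y, x ≠ y → 0 < w x y)
    (hsymm : ∀ x y, w x y = w y x) : IsSemimetric (offDiagDist w) where
  nonneg x y := by
    rcases eq_or_ne x y with rfl | hxy
    · rw [offDiagDist_self]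
    · rw [offDiagDist_of_ne hxy]
      exact (hpos x y hxy).le
  symm x y := by
    rcases eq_or_ne x y with rfl | hxy
    · rfl
    · rw [offDiagDist_of_ne hxy, offDiagDist_of_ne hxy.symm, hsymm]
  eq_zero_iff x y := by
    refine ⟨fun hzero => ?_, fun hxy => hxy ▸ offDiagDist_self x⟩
    by_contra hxy
    rw [offDiagDist_of_ne hxy] at hzero
    exact (hpos x y hxy).ne' hzero

end OffDiagDist

section AdjDist

variable {G : SimpleGraph X}

theorem isSemimetric_adjDist (G : SimpleGraph X) : IsSemimetric (adjDist G) := by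
  refine isSemimetric_offDiagDist (fun x y _ => ?_) fun x y => ?_
  · split_ifs <;> norm_num
  · rw [G.adj_comm]

theorem adjDist_of_adj {x y : X} (hxy : G.Adj x y) : adjDist G x y = 1 :=
  (offDiagDist_of_ne hxy.ne).trans (if_pos hxy)

theorem adjDist_of_not_adj {x y : X} (hne : x ≠ y) (hxy : ¬G.Adj x y) : adjDist G x y = 2 :=
  (offDiagDist_of_ne hne).trans (if_neg hxy)

theorem proximinal_adjDist (G : SimpleGraph X) (hA : A.Nonempty) : Proximinal (adjDist G) A := by
  refine proximinal_of_finite_image hA fun x => (toFinite {0, 1, 2}).subset ?_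
  rintro _ ⟨y, -, rfl⟩
  rcases eq_or_ne x y with rfl | hne
  · exact Or.inl (offDiagDist_self x)
  by_cases hxy : G.Adj x y
  · exact Or.inr (Or.inl (adjDist_of_adj hxy))
  · exact Or.inr (Or.inr (adjDist_of_not_adj hne hxy))

theorem setDist_adjDist (hAB : Disjoint A B) {a b : X} (ha : a ∈ A) (hb : b ∈ B)
    (hab : G.Adj a b) : SetDist (adjDist G) A B = 1 := by
  have hleast : IsLeast (image2 (adjDist G) A B) 1 := by
    refine ⟨⟨a, ha, b, hb, adjDist_of_adj hab⟩, forall_mem_image2.2 fun x hx y hy => ?_⟩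
    by_cases hxy : G.Adj x y
    · exact (adjDist_of_adj hxy).ge
    · rw [adjDist_of_not_adj (hAB.ne_of_mem hx hy) hxy]
      exact one_le_two
  exact hleast.csInf_eq

theorem proximinalFor_adjDist (hAB : Disjoint A B)
    (hbip : ∀ u v, G.Adj u v → (u ∈ A ∧ v ∈ B) ∨ (u ∈ B ∧ v ∈ A)) (hG : G ≠ ⊥) :
    ProximinalFor (adjDist G) G A B := by
  obtain ⟨a, ha, b, hb, hab⟩ : ∃ a ∈ A, ∃ b ∈ B, G.Adj a b := by
    obtain ⟨u, v, huv⟩ := SimpleGraph.ne_bot_iff_exists_adj.1 hG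
    rcases hbip u v huv with ⟨hu, hv⟩ | ⟨hu, hv⟩
    · exact ⟨u, hu, v, hv, huv⟩
    · exact ⟨v, hv, u, hu, huv.symm⟩
  refine ⟨⟨a, ha⟩, ⟨b, hb⟩, hAB, proximinal_adjDist G ⟨a, ha⟩, proximinal_adjDist G ⟨b, hb⟩,
    hbip, fun x hx y hy => ?_⟩
  rw [setDist_adjDist hAB ha hb hab]
  refine ⟨adjDist_of_adj, fun hxy => ?_⟩
  by_contra hadj
  rw [adjDist_of_not_adj (hAB.ne_of_mem hx hy) hadj] at hxy
  norm_num at hxy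

end AdjDist

section MaxDist

variable {h : X → ℝ}

theorem maxDist_of_ne {x y : X} (hxy : x ≠ y) : maxDist h x y = max (h x) (h y) :=
  offDiagDist_of_ne hxy

theorem isSemimetric_maxDist (hpos : ∀ x, 0 < h x) : IsSemimetric (maxDist h) :=
  isSemimetric_offDiagDist (fun x _ _ => lt_max_of_lt_left (hpos x)) (fun _ _ => max_comm _ _)

theorem proximinal_maxDist (hpos : ∀ x, 0 < h x) (hA : ∀ x ∉ A, ∃ a ∈ A, h a ≤ h x) :
    Proximinal (maxDist h) A := by
  refine (isSemimetric_maxDist hpos).proximinal_of_forall_notMem fun x hx => ?_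
  obtain ⟨a, ha, hax⟩ := hA x hx
  refine ⟨a, ha, fun y hy => ?_⟩
  rw [maxDist_of_ne (ne_of_mem_of_not_mem ha hx).symm,
    maxDist_of_ne (ne_of_mem_of_not_mem hy hx).symm, max_eq_left hax]
  exact le_max_left _ _

theorem setDist_maxDist_lt (hpos : ∀ x, 0 < h x) (hAB : Disjoint A B)
    (hA : ∀ a ∈ A, ∃ b ∈ B, h b < h a) (hB : ∀ b ∈ B, ∃ a ∈ A, h a < h b)
    {a b : X} (ha : a ∈ A) (hb : b ∈ B) : SetDist (maxDist h) A B < maxDist h a b := by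
  obtain ⟨b', hb', hlt⟩ := hA a ha
  obtain ⟨a', ha', hlt'⟩ := hB b' hb'
  calc SetDist (maxDist h) A B ≤ maxDist h a' b' := (isSemimetric_maxDist hpos).setDist_le ha' hb'
    _ = h b' := by rw [maxDist_of_ne (hAB.ne_of_mem ha' hb'), max_eq_right hlt'.le]
    _ < h a := hlt
    _ ≤ maxDist h a b := by
      rw [maxDist_of_ne (hAB.ne_of_mem ha hb)]
      exact le_max_left _ _

theorem proximinalFor_bot_maxDist (hpos : ∀ x, 0 < h x) (hne : A.Nonempty)
    (hA : ∀ a ∈ A, ∃ b ∈ Aᶜ, h b < h a) (hA' : ∀ b ∈ Aᶜ, ∃ a ∈ A, h a < h b) :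
    ProximinalFor (maxDist h) ⊥ A Aᶜ where
  nonemptyA := hne
  nonemptyB := by
    obtain ⟨a, ha⟩ := hne
    obtain ⟨b, hb, -⟩ := hA a ha
    exact ⟨b, hb⟩
  disj := disjoint_compl_right
  proxA := proximinal_maxDist hpos fun x hx =>
    (hA' x hx).imp fun _ => And.imp_right le_of_lt
  proxB := proximinal_maxDist hpos fun x hx =>
    (hA x (not_notMem.1 hx)).imp fun _ => And.imp_right le_of_lt
  edges_between _ _ := False.elim
  adj_iff _ ha _ hb :=
    iff_of_false id (setDist_maxDist_lt hpos disjoint_compl_right hA hA' ha hb).ne'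

theorem exists_proximinalFor_bot (X : Type*) [Infinite X] :
    ∃ (d : X → X → ℝ) (A : Set X), IsSemimetric d ∧ ProximinalFor d ⊥ A Aᶜ := by
  obtain ⟨s, hs⟩ : ∃ s : X → ℕ, s.Surjective :=
    ⟨_, Function.invFun_surjective (Infinite.natEmbedding X).injective⟩
  let h : X → ℝ := fun x => 1 / (s x + 1)
  have hpos : ∀ x, 0 < h x := fun x => Nat.one_div_pos_of_nat
  have hstep : ∀ x, ∃ y, s y = s x + 1 ∧ h y < h x := by
    intro x
    obtain ⟨y, hy⟩ := hs (s x + 1)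
    exact ⟨y, hy, Nat.one_div_lt_one_div (hy ▸ Nat.lt_succ_self _)⟩
  refine ⟨maxDist h, {x | Even (s x)}, isSemimetric_maxDist hpos,
    proximinalFor_bot_maxDist hpos ?_ (fun x hx => ?_) (fun x hx => ?_)⟩
  · obtain ⟨x, hx⟩ := hs 0
    exact ⟨x, by simp [hx]⟩
  · obtain ⟨y, hy, hlt⟩ := hstep x
    exact ⟨y, by simpa [hy, Nat.even_add_one] using hx, hlt⟩
  · obtain ⟨y, hy, hlt⟩ := hstep x
    exact ⟨y, by simpa [hy, Nat.even_add_one] using hx, hlt⟩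

end MaxDist

end ProximinalGraph

/-- Corollary 2.2: a bipartite graph `G` (with parts `A`, `B` and vertex set
`A ∪ B = V`) is not isomorphic to any proximinal graph iff `G` is finite and empty. -/
theorem stmt1 {V : Type u} (G : SimpleGraph V) (A B : Set V)
    (hA : A.Nonempty) (hB : B.Nonempty) (hAB : Disjoint A B)
    (hcover : A ∪ B = Set.univ)
    (hbip : ∀ u v, G.Adj u v → (u ∈ A ∧ v ∈ B) ∨ (u ∈ B ∧ v ∈ A)) :
    (¬ ∃ (X : Type u) (d : X → X → ℝ) (H : SimpleGraph X) (A' B' : Set X),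
        IsSemimetric d ∧ ProximinalFor d H A' B' ∧ A' ∪ B' = Set.univ ∧
          Nonempty (G ≃g H)) ↔
      (Finite V ∧ G.edgeSet = ∅) := by
  constructor
  · intro hno
    have hbot : G = ⊥ := by
      by_contra hne
      exact hno ⟨V, adjDist G, G, A, B, isSemimetric_adjDist G,
        proximinalFor_adjDist hAB hbip hne, hcover, ⟨.refl⟩⟩
    refine ⟨?_, SimpleGraph.edgeSet_eq_empty.2 hbot⟩
    by_contra hfin
    have : Infinite V := not_finite_iff_infinite.1 hfin
    obtain ⟨d, A', hd, hprox⟩ := exists_proximinalFor_bot V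
    exact hno ⟨V, d, ⊥, A', A'ᶜ, hd, hprox, union_compl_self A', ⟨hbot ▸ .refl⟩⟩
  · rintro ⟨_, hempty⟩ ⟨X, d, H, A', B', -, hprox, -, ⟨e⟩⟩
    have : Finite X := Finite.of_equiv V e.toEquiv
    obtain ⟨a, -, b, -, hab⟩ := hprox.exists_adj (toFinite A') (toFinite B')
    exact SimpleGraph.eq_bot_iff_forall_not_adj.1 (SimpleGraph.edgeSet_eq_empty.1 hempty) _ _
      (e.symm.map_adj_iff.2 hab)
end

section
/- Let G be a bipartite graph with fixed parts A and B. Then the following three statements are equivalent: (1) either G is nonempty, or G is empty but at least one of the parts A, B is infinite; (2) G is farthest for a metric space; (3) G is farthest for a semimetric space. -/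
open Set

/-!
Being farthest depends only on how the weights of the pairs in `A × B` compare, so any symmetric
weight can be replaced by a metric: compress its values monotonically into `(1, 2)`, where the
triangle inequality is automatic. It therefore suffices to find a symmetric real weight whose
maximisers on `A × B` are exactly the edges. If there are edges, the indicator of adjacency works.
If there are none and `A ∪ B` is infinite, `g x + g y` has no maximiser when `g` is unbounded
on `A ∪ B`. Conversely, a weight on a nonempty finite `A × B` attains its maximum, at an edge.
-/

section SigmoidDist

variable {X : Type*} {w : X → X → ℝ}

open Classical in
/-- The distance obtained from a symmetric weight `w` by compressing its values into `(1, 2)`.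
The weights `w x x` are discarded, and distinct pairs of points compare as they do under `w`. -/
noncomputable def sigmoidDist (w : X → X → ℝ) (x y : X) : ℝ :=
  if x = y then 0 else 1 + Real.sigmoid (w x y)

@[simp]
theorem sigmoidDist_self (w : X → X → ℝ) (x : X) : sigmoidDist w x x = 0 :=
  if_pos rfl

theorem sigmoidDist_of_ne (w : X → X → ℝ) {x y : X} (hxy : x ≠ y) :
    sigmoidDist w x y = 1 + Real.sigmoid (w x y) :=
  if_neg hxy

theorem one_lt_sigmoidDist (w : X → X → ℝ) {x y : X} (hxy : x ≠ y) : 1 < sigmoidDist w x y := by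
  rw [sigmoidDist_of_ne w hxy]
  linarith [Real.sigmoid_pos (w x y)]

theorem sigmoidDist_lt_two (w : X → X → ℝ) (x y : X) : sigmoidDist w x y < 2 := by
  rcases eq_or_ne x y with rfl | hxy
  · simp
  · rw [sigmoidDist_of_ne w hxy]
    linarith [Real.sigmoid_lt_one (w x y)]

theorem sigmoidDist_le_sigmoidDist_iff {a b x y : X} (hab : a ≠ b) (hxy : x ≠ y) :
    sigmoidDist w a b ≤ sigmoidDist w x y ↔ w a b ≤ w x y := by
  rw [sigmoidDist_of_ne w hab, sigmoidDist_of_ne w hxy, add_le_add_iff_left,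
    Real.sigmoid_strictMono.le_iff_le]

theorem isSemimetric_sigmoidDist (hw : ∀ x y, w x y = w y x) : IsSemimetric (sigmoidDist w) where
  nonneg x y := by
    rcases eq_or_ne x y with rfl | hxy
    · simp
    · linarith [one_lt_sigmoidDist w hxy]
  symm x y := by
    rcases eq_or_ne x y with rfl | hxy
    · rfl
    · rw [sigmoidDist_of_ne w hxy, sigmoidDist_of_ne w hxy.symm, hw]
  eq_zero_iff x y := by
    refine ⟨fun h => ?_, fun h => h ▸ sigmoidDist_self w x⟩
    by_contra hxy
    linarith [one_lt_sigmoidDist w hxy]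

theorem isMetric_sigmoidDist (hw : ∀ x y, w x y = w y x) : IsMetric (sigmoidDist w) := by
  refine ⟨isSemimetric_sigmoidDist hw, fun x y z => ?_⟩
  rcases eq_or_ne x z with rfl | hxz
  · simp
  rcases eq_or_ne z y with rfl | hzy
  · simp
  linarith [sigmoidDist_lt_two w x y, one_lt_sigmoidDist w hxz, one_lt_sigmoidDist w hzy]

end SigmoidDist

section Farthest

variable {X : Type*} {w : X → X → ℝ} {G : SimpleGraph X} {A B : Set X}

theorem FarthestFor.sigmoidDist (h : FarthestFor w G A B) :
    FarthestFor (sigmoidDist w) G A B where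
  __ := h
  adj_iff a ha b hb := by
    rw [h.adj_iff a ha b hb]
    exact forall₂_congr fun x hx => forall₂_congr fun y hy =>
      (sigmoidDist_le_sigmoidDist_iff (h.disj.ne_of_mem hx hy) (h.disj.ne_of_mem ha hb)).symm

theorem FarthestFor.exists_isMetric (h : FarthestFor w G A B) (hw : ∀ x y, w x y = w y x) :
    ∃ d : X → X → ℝ, IsMetric d ∧ FarthestFor d G A B :=
  ⟨_, isMetric_sigmoidDist hw, h.sigmoidDist⟩

theorem FarthestFor.edgeSet_nonempty (h : FarthestFor w G A B) (hA : A.Finite) (hB : B.Finite) :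
    G.edgeSet.Nonempty := by
  obtain ⟨⟨a, b⟩, ⟨ha, hb⟩, hmax⟩ :=
    (A ×ˢ B).exists_max_image (fun p => w p.1 p.2) (hA.prod hB) (h.nonemptyA.prod h.nonemptyB)
  exact ⟨s(a, b), (h.adj_iff a ha b hb).2 fun x hx y hy => hmax (x, y) ⟨hx, hy⟩⟩

theorem exists_adj_of_isBipartiteWith (hG : G.IsBipartiteWith A B) (hE : G.edgeSet.Nonempty) :
    ∃ a ∈ A, ∃ b ∈ B, G.Adj a b := by
  obtain ⟨⟨u, v⟩, huv : G.Adj u v⟩ := hE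
  rcases hG.mem_of_adj huv with ⟨hu, hv⟩ | ⟨hu, hv⟩
  · exact ⟨u, hu, v, hv, huv⟩
  · exact ⟨v, hv, u, hu, huv.symm⟩

theorem farthestFor_adjMatrix [DecidableRel G.Adj] (hG : G.IsBipartiteWith A B)
    (hE : G.edgeSet.Nonempty) : FarthestFor (G.adjMatrix ℝ) G A B := by
  obtain ⟨a₀, ha₀, b₀, hb₀, hadj₀⟩ := exists_adj_of_isBipartiteWith hG hE
  refine ⟨⟨a₀, ha₀⟩, ⟨b₀, hb₀⟩, hG.disjoint, fun _ _ huv => hG.mem_of_adj huv,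
    fun a _ b _ => ⟨fun hab x _ y _ => ?_, fun hmax => ?_⟩⟩
  · simp only [SimpleGraph.adjMatrix_apply, if_pos hab]
    split_ifs <;> norm_num
  · by_contra hab
    have hle := hmax a₀ ha₀ b₀ hb₀
    simp only [SimpleGraph.adjMatrix_apply, if_pos hadj₀, if_neg hab] at hle
    norm_num at hle

theorem farthestFor_bot_add {g : X → ℝ} (hA : A.Nonempty) (hB : B.Nonempty) (hAB : Disjoint A B)
    (hg : ¬BddAbove (g '' (A ∪ B))) : FarthestFor (fun x y => g x + g y) ⊥ A B where
  nonemptyA := hA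
  nonemptyB := hB
  disj := hAB
  edges_between _ _ huv := huv.elim
  adj_iff a ha b hb := by
    refine ⟨fun hab => hab.elim, fun hmax => hg ⟨max (g a) (g b), ?_⟩⟩
    rintro _ ⟨z, hzA | hzB, rfl⟩
    · exact le_max_of_le_left (le_of_add_le_add_right (hmax z hzA b hb))
    · exact le_max_of_le_right (le_of_add_le_add_left (hmax a ha z hzB))

end Farthest

theorem exists_not_bddAbove_image_of_infinite {X : Type*} {S : Set X} (hS : S.Infinite) :
    ∃ g : X → ℝ, ¬BddAbove (g '' S) := by
  let e : ℕ → X := fun n => hS.natEmbedding S n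
  have he : Function.Injective e := Subtype.val_injective.comp (hS.natEmbedding S).injective
  refine ⟨Function.extend e Nat.cast 0, fun ⟨M, hM⟩ => ?_⟩
  obtain ⟨n, hn⟩ := exists_nat_gt M
  have hle : Function.extend e Nat.cast 0 (e n) ≤ M :=
    hM (mem_image_of_mem _ (hS.natEmbedding S n).2)
  rw [he.extend_apply] at hle
  exact hn.not_ge hle

theorem stmt12_general {X : Type*} {G : SimpleGraph X} {A B : Set X}
    (hA : A.Nonempty) (hB : B.Nonempty) (hG : G.IsBipartiteWith A B) :
    List.TFAE [
      G.edgeSet.Nonempty ∨ (G.edgeSet = ∅ ∧ (A.Infinite ∨ B.Infinite)),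
      ∃ d : X → X → ℝ, IsMetric d ∧ FarthestFor d G A B,
      ∃ d : X → X → ℝ, IsSemimetric d ∧ FarthestFor d G A B] := by
  tfae_have 1 → 2 := by
    classical
    rintro (hE | ⟨hE, hinf⟩)
    · exact (farthestFor_adjMatrix hG hE).exists_isMetric fun x y => G.isSymm_adjMatrix.apply y x
    · obtain rfl := SimpleGraph.edgeSet_eq_empty.1 hE
      obtain ⟨g, hg⟩ := exists_not_bddAbove_image_of_infinite (infinite_union.2 hinf)
      exact (farthestFor_bot_add hA hB hG.disjoint hg).exists_isMetric fun x y => add_comm _ _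
  tfae_have 2 → 3 := fun ⟨d, hd, h⟩ => ⟨d, hd.1, h⟩
  tfae_have 3 → 1 := by
    rintro ⟨d, -, h⟩
    refine G.edgeSet.eq_empty_or_nonempty.symm.imp_right fun hE => ⟨hE, ?_⟩
    by_contra! hfin
    exact (h.edgeSet_nonempty hfin.1 hfin.2).ne_empty hE
  tfae_finish

/-- Theorem 3.2: for a bipartite graph `G` with fixed parts `A`, `B` (vertex set
`A ∪ B`), the following are equivalent: (1) `G` is nonempty, or `G` is empty but at
least one of the parts `A`, `B` is infinite; (2) `G` is farthest for a metric
space; (3) `G` is farthest for a semimetric space. -/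
theorem stmt12 {V : Type*} (G : SimpleGraph V) (A B : Set V)
    (hA : A.Nonempty) (hB : B.Nonempty) (hAB : Disjoint A B)
    (hcover : A ∪ B = Set.univ)
    (hbip : ∀ u v, G.Adj u v → (u ∈ A ∧ v ∈ B) ∨ (u ∈ B ∧ v ∈ A)) :
    List.TFAE [
      G.edgeSet.Nonempty ∨ (G.edgeSet = ∅ ∧ (A.Infinite ∨ B.Infinite)),
      ∃ d : V → V → ℝ, IsMetric d ∧ FarthestFor d G A B,
      ∃ d : V → V → ℝ, IsSemimetric d ∧ FarthestFor d G A B] :=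
  stmt12_general hA hB ⟨hAB, hbip⟩
end
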